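/- Fix finite nonempty supports A_1,…,A_k ⊆ ℕ^n such that every α ∈ A_j has all coordinates ≥ 1 (so x_1⋯x_n divides each f_j). There exists a nonzero polynomial G in the coefficients c = (c_{j,α}) and the data u such that whenever G(c,u) ≠ 0, for every nonzero w = (0,b) ∈ ℤ^n × ℤ^k whose first n coordinates are zero, the initial system init_w(L(F)) = (init_w(ℓ_1),…,init_w(ℓ_n), init_w(f_1),…,init_w(f_k)) has no solutions in (ℂ*)^{n+k}. -/

import Mathlib

/-!
Write `θ_i = x_i ∂/∂x_i`. When all coefficients and all `u_i` are nonzero, every monomial of `f_j`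
survives in `θ_i f_j`, because its exponents are positive. Hence for `w = (0, b)` the initial forms
depend only on `m = min(0, min b)` and `J = {j | b j = m}`: they are the `f_j` themselves together
with `ε u_i - ∑_{j ∈ J} λ_j θ_i f_j`, where either `ε = 0` and `J` is nonempty (`m < 0`), or
`ε = 1` and `J` is not everything (`m = 0`, `b ≠ 0`). There are finitely many such systems, so it
suffices to find, for each, a nonzero polynomial in `(c, u)` vanishing at all parameters for which
the system has a solution in the torus.

If there were none, some prime ideal of the polynomial ring in parameters and unknowns would contain
the equations, but no product of a nonzero polynomial in the parameters with a power of the product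
of the unknowns. The fraction field `L` of the quotient would then contain a solution in the
torus with `(c, u)` algebraically independent over `ℂ` (`elim_lemma`). As `L` has characteristic
zero, the derivation `∂/∂t` for each parameter `t` extends to `L` (`exists_derivation`), and
differentiating the equations gives a contradiction. Below `dlog x = D x / x`.

* `ε = 0`: with `j₀ ∈ J` and `D = ∂/∂c_{j₀,α}`, applying `D` to `f_j = 0`, multiplying by `λ_j` and
  summing over `J` yields `λ_{j₀} x^α + ∑_i (∑_J λ_j θ_i f_j) dlog x_i = 0`, and the second term
  vanishes (`no_sol_degenerate`).
* `ε = 1`: take `j₀ ∉ J`, `D = ∂/∂c_{j₀,α}` and `E = ∂/∂u_r`, with logarithmic derivatives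
  `w = D x / x`, `y = E x / x`. Both kill the coefficients of `f_j` for `j ∈ J`, so
  `∑_i D(u_i) y_i = ∑_i E(u_i) w_i`, since both sides equal the value at `(w, y)` of a symmetric
  Hessian form (`symm_pairing`). The left side is `0` and the right side is `w_r`. So `w = 0`,
  and `D f_{j₀} = 0` reads `x^α = 0` (`no_sol_overdetermined`).
-/

open MvPolynomial

/-- The polynomial `ℓ_i = u_i - x_i · Σ_j λ_j ∂f_j/∂x_i` of the ML system,
as an element of `ℂ[x_1,…,x_n,λ_1,…,λ_k]` (variables indexed by `Fin n ⊕ Fin k`). -/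
noncomputable def mlEll (n k : ℕ) (f : Fin k → MvPolynomial (Fin n) ℂ)
    (u : Fin n → ℂ) (i : Fin n) : MvPolynomial (Fin n ⊕ Fin k) ℂ :=
  C (u i) - X (Sum.inl i) *
    ∑ j : Fin k, X (Sum.inr j) * rename Sum.inl (pderiv i (f j))

/-- The solution set of the ML system `L(F)` in `ℂ^n × ℂ^k`. -/
def mlSol (n k : ℕ) (f : Fin k → MvPolynomial (Fin n) ℂ) (u : Fin n → ℂ) :
    Set ((Fin n → ℂ) × (Fin k → ℂ)) :=
  {p | (∀ i, eval (Sum.elim p.1 p.2) (mlEll n k f u i) = 0) ∧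
       (∀ j, eval p.1 (f j) = 0)}

/-- The Newton polytope of a multivariate polynomial. -/
noncomputable def newt {σ : Type*} (f : MvPolynomial σ ℂ) : Set (σ → ℝ) :=
  convexHull ℝ ((fun d : σ →₀ ℕ => fun i => ((d i : ℕ) : ℝ)) '' ↑f.support)

/-- `⟨w, x⟩` for an integer weight vector `w`. -/
def wdot {σ : Type*} [Fintype σ] (w : σ → ℤ) (x : σ → ℝ) : ℝ :=
  ∑ i, (w i : ℝ) * x i

/-- The face of `P` exposed by `w`. -/
def faceOf {σ : Type*} [Fintype σ] (w : σ → ℤ) (P : Set (σ → ℝ)) : Set (σ → ℝ) :=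
  {x ∈ P | ∀ y ∈ P, wdot w x ≤ wdot w y}

/-- `val_w(P) = min_{x ∈ P} ⟨w,x⟩`. -/
noncomputable def valOf {σ : Type*} [Fintype σ] (w : σ → ℤ) (P : Set (σ → ℝ)) : ℝ :=
  sInf (wdot w '' P)

/-- The initial polynomial `init_w(f)`: the sum of the terms of `f` whose
exponent vectors minimize `⟨w,·⟩` over the support of `f`. -/
noncomputable def initw {σ : Type*} [Fintype σ] (w : σ → ℤ) (f : MvPolynomial σ ℂ) :
    MvPolynomial σ ℂ :=
  ∑ d ∈ f.support.filter
      (fun d => ∀ d' ∈ f.support, ∑ i, w i * (d i : ℤ) ≤ ∑ i, w i * (d' i : ℤ)),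
    monomial d (coeff d f)

/-- The sparse polynomial with support `A` and coefficients `c`. -/
noncomputable def sparsePoly (n : ℕ) (A : Finset (Fin n →₀ ℕ)) (c : (Fin n →₀ ℕ) → ℂ) :
    MvPolynomial (Fin n) ℂ :=
  ∑ α ∈ A, monomial α (c α)


/-! ### Elimination -/

/-- Elimination: if the equations `E`, with the inequation `M ≠ 0`, have no solution over a field
extension of `ℂ` in which the parameters `z` are algebraically independent, then the parameters in
`ℂ` admitting a solution satisfy a nontrivial polynomial relation. -/
lemma elim_lemma {σ τ ι : Type} (E : ι → MvPolynomial (σ ⊕ τ) ℂ) (M : MvPolynomial (σ ⊕ τ) ℂ)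
    (h : ∀ (L : Type) [Field L] [Algebra ℂ L] (z : σ → L) (p : τ → L),
      AlgebraicIndependent ℂ z → (∀ i, aeval (Sum.elim z p) (E i) = 0) →
      aeval (Sum.elim z p) M ≠ 0 → False) :
    ∃ G : MvPolynomial σ ℂ, G ≠ 0 ∧ ∀ (z : σ → ℂ) (p : τ → ℂ),
      (∀ i, eval (Sum.elim z p) (E i) = 0) → eval (Sum.elim z p) M ≠ 0 → eval z G = 0 := by
  classical
  set I : Ideal (MvPolynomial (σ ⊕ τ) ℂ) := Ideal.span (Set.range E) with hI
  -- A prime containing `I` and disjoint from `N` gives a generic solution, while an element of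
  -- `I ∩ N` is `G * M ^ m` with `G` the desired relation.
  set N : Submonoid (MvPolynomial (σ ⊕ τ) ℂ) :=
    (nonZeroDivisors (MvPolynomial σ ℂ)).map
      (rename (Sum.inl : σ → σ ⊕ τ) : MvPolynomial σ ℂ →ₐ[ℂ] _) ⊔ Submonoid.powers M with hN
  by_cases hd : Disjoint (I : Set (MvPolynomial (σ ⊕ τ) ℂ)) N
  · exfalso
    obtain ⟨P, hP, hIP, hPN⟩ := Ideal.exists_le_prime_disjoint I N hd
    have key : ∀ q, aeval (Sum.elim
        (fun s => algebraMap _ (FractionRing (_ ⧸ P)) (Ideal.Quotient.mk P (X (Sum.inl s))))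
        (fun t => algebraMap _ (FractionRing (_ ⧸ P)) (Ideal.Quotient.mk P (X (Sum.inr t))))) q
        = algebraMap _ (FractionRing (MvPolynomial (σ ⊕ τ) ℂ ⧸ P)) (Ideal.Quotient.mk P q) := by
      intro q
      have : aeval (Sum.elim
        (fun s => algebraMap _ (FractionRing (_ ⧸ P)) (Ideal.Quotient.mk P (X (Sum.inl s))))
        (fun t => algebraMap _ (FractionRing (_ ⧸ P)) (Ideal.Quotient.mk P (X (Sum.inr t)))))
        = (IsScalarTower.toAlgHom ℂ (MvPolynomial (σ ⊕ τ) ℂ ⧸ P) (FractionRing _)).comp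
          (Ideal.Quotient.mkₐ ℂ P) := by
        ext i
        rcases i with i | i <;> simp
      exact DFunLike.congr_fun this q
    have inj : Function.Injective (algebraMap (MvPolynomial (σ ⊕ τ) ℂ ⧸ P)
      (FractionRing (MvPolynomial (σ ⊕ τ) ℂ ⧸ P))) := IsFractionRing.injective _ _
    have nz : ∀ q ∈ N, algebraMap _ (FractionRing (MvPolynomial (σ ⊕ τ) ℂ ⧸ P))
        (Ideal.Quotient.mk P q) ≠ 0 := by
      intro q hq h0
      have := Ideal.Quotient.eq_zero_iff_mem.1 (inj (h0.trans (map_zero _).symm))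
      exact Set.disjoint_left.1 hPN this hq
    refine h (FractionRing (MvPolynomial (σ ⊕ τ) ℂ ⧸ P)) _ _ ?_
      (fun i => (key _).trans ?_) ((key M).trans_ne ?_)
    · rw [algebraicIndependent_iff]
      intro q hq
      by_contra hq0
      refine nz (rename Sum.inl q) ?_ ?_
      · exact Submonoid.mem_sup_left ⟨q, mem_nonZeroDivisors_of_ne_zero hq0, rfl⟩
      · rw [← key, aeval_rename]; exact hq
    · rw [Ideal.Quotient.eq_zero_iff_mem.2 (hIP (Ideal.subset_span ⟨i, rfl⟩)), map_zero]
    · exact nz M (Submonoid.mem_sup_right (Submonoid.mem_powers M))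
  · obtain ⟨q, hqI, hqN⟩ := Set.not_disjoint_iff.1 hd
    obtain ⟨_, ⟨G, hG, rfl⟩, _, ⟨m, rfl⟩, rfl⟩ := Submonoid.mem_sup.1 hqN
    refine ⟨G, nonZeroDivisors.ne_zero hG, fun z p hE hM => ?_⟩
    have hle : I ≤ RingHom.ker (eval (Sum.elim z p)) := by
      rw [hI, Ideal.span_le]
      rintro _ ⟨i, rfl⟩
      exact hE i
    have h0 : eval (Sum.elim z p) _ = 0 := hle hqI
    simp only [map_mul, map_pow] at h0
    rcases mul_eq_zero.1 h0 with h0 | h0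
    · simpa [eval_rename, Function.comp_def] using h0
    · exact absurd h0 (pow_ne_zero m hM)

open scoped IntermediateField.algebraAdjoinAdjoin in
open TensorProduct in
/-- The partial derivative with respect to a member of an algebraically independent family extends
to the whole field: enlarge the family to a transcendence basis, whose polynomial ring `B` has `L`
as a formally étale algebra (a localization followed by a separable algebraic extension), so
that `Ω[L⁄ℂ]` is the base change of `Ω[B⁄ℂ]`. -/
lemma exists_derivation {ι L : Type} [Field L] [Algebra ℂ L] {z : ι → L}
    (hz : AlgebraicIndependent ℂ z) [DecidableEq ι] (s : ι) :
    ∃ D : Derivation ℂ L L, ∀ t, D (z t) = if t = s then 1 else 0 := by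
  obtain ⟨t, hst, ht⟩ := exists_isTranscendenceBasis_superset (R := ℂ) hz.coe_range
  set r : t → L := Subtype.val with hr
  have halg : Algebra.IsAlgebraic (IntermediateField.adjoin ℂ (Set.range r)) L :=
    ht.isAlgebraic_field
  let B := Algebra.adjoin ℂ (Set.range r)
  let F := IntermediateField.adjoin ℂ (Set.range r)
  have h1 : Algebra.FormallyEtale B F := .of_isLocalization (nonZeroDivisors _)
  have h2 : Algebra.FormallyEtale F L := .of_isSeparable _ L
  have h3 : Algebra.FormallyEtale B L := .comp B F L
  let e : MvPolynomial t ℂ ≃ₐ[ℂ] B := ht.1.aevalEquiv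
  let s' : t := ⟨z s, hst ⟨s, rfl⟩⟩
  let D1 : Derivation ℂ B L := Derivation.mk'
    ((Algebra.linearMap B L).restrictScalars ℂ ∘ₗ e.toLinearMap ∘ₗ
      (pderiv s' : Derivation ℂ (MvPolynomial t ℂ) _).toLinearMap ∘ₗ e.symm.toLinearMap) (by
      intro a b
      simp [Algebra.smul_def, Derivation.leibniz])
  let φ : L ⊗[B] Ω[B⁄ℂ] →ₗ[L] L := LinearMap.liftBaseChange L D1.liftKaehlerDifferential
  let D : Derivation ℂ L L :=
    (φ ∘ₗ (KaehlerDifferential.tensorKaehlerEquivOfFormallyEtale ℂ B L).symm.toLinearMap).compDer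
      (KaehlerDifferential.D ℂ L)
  have hD : ∀ b : B, D (algebraMap B L b) = D1 b := by
    intro b
    change φ ((KaehlerDifferential.tensorKaehlerEquivOfFormallyEtale ℂ B L).symm
      (KaehlerDifferential.D ℂ L (algebraMap B L b))) = D1 b
    rw [KaehlerDifferential.tensorKaehlerEquivOfFormallyEtale_symm_D_algebraMap]
    simp [φ]
  refine ⟨D, fun i => ?_⟩
  let i' : t := ⟨z i, hst ⟨i, rfl⟩⟩
  have h4 : z i = algebraMap B L (e (X i')) := by
    simp [e, B, i', hr]
  rw [h4, hD]
  change algebraMap B L (e (pderiv s' (e.symm (e (X i'))))) = _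
  rw [e.symm_apply_apply]
  have h5 : i' = s' ↔ i = s := by
    simp [i', s', hz.injective.eq_iff]
  by_cases h6 : i = s
  · rw [if_pos h6, h5.2 h6, pderiv_X_self, map_one, map_one]
  · rw [if_neg h6, pderiv_X_of_ne (fun h => h6 (h5.1 h)), map_zero, map_zero]

/-! ### Derivations along a solution -/

section field
variable {L : Type} [Field L] [Algebra ℂ L] {n k : ℕ}

lemma deriv_mon (D : Derivation ℂ L L) (x : Fin n → L) (hx : ∀ i, x i ≠ 0) (α : Fin n →₀ ℕ) :
    D (∏ i, x i ^ α i) = (∏ i, x i ^ α i) * ∑ i, (α i : L) * (D (x i) / x i) := by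
  classical
  have : ∀ s : Finset (Fin n), D (∏ i ∈ s, x i ^ α i) =
      (∏ i ∈ s, x i ^ α i) * ∑ i ∈ s, (α i : L) * (D (x i) / x i) := by
    intro s
    induction s using Finset.induction_on with
    | empty => simp
    | insert a s ha ih =>
      rw [Finset.prod_insert ha, Finset.sum_insert ha, Derivation.leibniz, ih,
        Derivation.leibniz_pow]
      simp only [smul_eq_mul, nsmul_eq_mul]
      rcases Nat.eq_zero_or_pos (α a) with h | h
      · simp [h]
      · obtain ⟨m, hm⟩ := Nat.exists_eq_succ_of_ne_zero h.ne'
        have := hx a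
        rw [hm]
        simp only [Nat.succ_eq_add_one, Nat.add_sub_cancel, pow_succ]
        field_simp
        ring
  exact this _

/-- The chain rule `D f(x) = f^D(x) + ∑ i, (θ_i f)(x) · D x_i / x_i`, with `f^D` obtained by
differentiating the coefficients. -/
lemma deriv_eval (D : Derivation ℂ L L) (x : Fin n → L) (hx : ∀ i, x i ≠ 0)
    (A : Finset (Fin n →₀ ℕ)) (a : (Fin n →₀ ℕ) → L) :
    D (∑ α ∈ A, a α * ∏ i, x i ^ α i) = ∑ α ∈ A, D (a α) * ∏ i, x i ^ α i +
      ∑ i, (∑ α ∈ A, (α i : L) * a α * ∏ i, x i ^ α i) * (D (x i) / x i) := by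
  simp only [map_sum, Derivation.leibniz, deriv_mon D x hx, smul_eq_mul, Finset.sum_mul,
    Finset.mul_sum]
  rw [Finset.sum_comm (s := Finset.univ), ← Finset.sum_add_distrib]
  refine Finset.sum_congr rfl fun α _ => ?_
  rw [add_comm, mul_comm]
  congr 1
  exact Finset.sum_congr rfl fun i _ => by ring

/-- If `v_i = ∑_{j ∈ J} λ_j θ_i f_j(x)`, `f(x) = 0`, and `D`, `E` kill the coefficients of
`f_j` for `j ∈ J`, then `∑ i, D(v_i) · E x_i / x_i` is the Hessian form `∑_{j ∈ J} λ_j θθ f_j` at the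
logarithmic derivatives of `x`. The right-hand side is symmetric in `D` and `E`. -/
lemma symm_pairing (D E : Derivation ℂ L L) (x : Fin n → L) (hx : ∀ i, x i ≠ 0)
    (A : Fin k → Finset (Fin n →₀ ℕ)) (a : Fin k → (Fin n →₀ ℕ) → L) (l : Fin k → L)
    (J : Finset (Fin k)) (hD : ∀ j ∈ J, ∀ α, D (a j α) = 0)
    (hE : ∀ j ∈ J, ∀ α, E (a j α) = 0)
    (hf : ∀ j, ∑ α ∈ A j, a j α * ∏ i, x i ^ α i = 0) (v : Fin n → L)
    (hv : ∀ i, v i = ∑ j ∈ J, l j * ∑ α ∈ A j, (α i : L) * a j α * ∏ i, x i ^ α i) :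
    ∑ i, D (v i) * (E (x i) / x i) = ∑ j ∈ J, l j * ∑ α ∈ A j, a j α * (∏ i, x i ^ α i) *
      ((∑ i, (α i : L) * (D (x i) / x i)) * (∑ i, (α i : L) * (E (x i) / x i))) := by
  -- Thanks to `E f_j(x) = 0`, the terms involving `D (λ_j)` contribute nothing.
  have hEf : ∀ j ∈ J, ∑ i, (∑ α ∈ A j, (α i : L) * a j α * ∏ i, x i ^ α i) * (E (x i) / x i)
      = 0 := by
    intro j hj
    have := deriv_eval E x hx (A j) (a j)
    rw [hf j, map_zero] at this
    simpa [hE j hj] using this.symm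
  have h1 : ∀ i, D (v i) * (E (x i) / x i) = ∑ j ∈ J,
      (D (l j) * ((∑ α ∈ A j, (α i : L) * a j α * ∏ i, x i ^ α i) * (E (x i) / x i)) +
      l j * ∑ α ∈ A j, a j α * (∏ i, x i ^ α i) *
        ((∑ i, (α i : L) * (D (x i) / x i)) * ((α i : L) * (E (x i) / x i)))) := by
    intro i
    rw [hv i, map_sum, Finset.sum_mul]
    refine Finset.sum_congr rfl fun j hj => ?_
    have : D (∑ α ∈ A j, (α i : L) * a j α * ∏ i, x i ^ α i) =
        ∑ α ∈ A j, a j α * (∏ i, x i ^ α i) * ((∑ i, (α i : L) * (D (x i) / x i)) * (α i : L)) := by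
      rw [map_sum]
      refine Finset.sum_congr rfl fun α _ => ?_
      rw [Derivation.leibniz, deriv_mon D x hx, Derivation.leibniz, hD j hj]
      simp only [smul_eq_mul, Derivation.map_natCast]
      ring
    rw [Derivation.leibniz, this]
    simp only [smul_eq_mul, add_mul]
    rw [add_comm]
    congr 1
    · ring
    · rw [mul_assoc, Finset.sum_mul]
      congr 1
      exact Finset.sum_congr rfl fun α _ => by ring
  rw [Finset.sum_congr rfl fun i _ => h1 i, Finset.sum_comm]
  refine Finset.sum_congr rfl fun j hj => ?_
  rw [Finset.sum_add_distrib, ← Finset.mul_sum, hEf j hj, mul_zero, zero_add, ← Finset.mul_sum,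
    Finset.sum_comm]
  congr 1
  refine Finset.sum_congr rfl fun α _ => ?_
  rw [← Finset.mul_sum, ← Finset.mul_sum]

/-- Generic `f_j` with `j ∈ J` have independent logarithmic gradients at a common zero: no relation
`∑_{j ∈ J} λ_j θ f_j(x) = 0` with all `λ_j` nonzero exists in the torus. -/
lemma no_sol_degenerate (A : Fin k → Finset (Fin n →₀ ℕ)) (hA : ∀ j, (A j).Nonempty)
    (J : Finset (Fin k)) (hJ : J.Nonempty) (z : (Fin k × (Fin n →₀ ℕ)) ⊕ Fin n → L)
    (hz : AlgebraicIndependent ℂ z) (x : Fin n → L) (l : Fin k → L) (hx : ∀ i, x i ≠ 0)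
    (hl : ∀ j, l j ≠ 0)
    (hf : ∀ j, ∑ α ∈ A j, z (Sum.inl (j, α)) * ∏ i, x i ^ α i = 0)
    (hv : ∀ i, ∑ j ∈ J, l j * ∑ α ∈ A j, (α i : L) * z (Sum.inl (j, α)) * ∏ i, x i ^ α i = 0) :
    False := by
  classical
  obtain ⟨j0, hj0⟩ := hJ
  obtain ⟨α0, hα0⟩ := hA j0
  obtain ⟨D, hD⟩ := exists_derivation hz (Sum.inl (j0, α0))
  have h1 : ∑ j ∈ J, l j * D (∑ α ∈ A j, z (Sum.inl (j, α)) * ∏ i, x i ^ α i) =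
      l j0 * ∏ i, x i ^ α0 i + ∑ i, (∑ j ∈ J, l j *
        ∑ α ∈ A j, (α i : L) * z (Sum.inl (j, α)) * ∏ i, x i ^ α i) * (D (x i) / x i) := by
    have h2 : ∀ j, D (∑ α ∈ A j, z (Sum.inl (j, α)) * ∏ i, x i ^ α i) = _ :=
      fun j => deriv_eval D x hx (A j) (fun α => z (Sum.inl (j, α)))
    simp only [h2, mul_add, Finset.sum_add_distrib]
    congr 1
    · rw [Finset.sum_eq_single_of_mem j0 hj0, Finset.sum_eq_single_of_mem α0 hα0]
      · simp [hD]
      · intro α _ hne; simp [hD, hne]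
      · intro j _ hne; simp [hD, hne]
    · simp only [Finset.sum_mul, Finset.mul_sum]
      rw [Finset.sum_comm]
      simp only [mul_assoc]
  simp only [hf, hv, map_zero, mul_zero, zero_mul, Finset.sum_const_zero, add_zero] at h1
  exact mul_ne_zero (hl j0) (Finset.prod_ne_zero_iff.2 fun i _ => pow_ne_zero _ (hx i)) h1.symm

/-- For generic data, a critical point for the constraints `f_j`, `j ∈ J`, satisfies no
further generic constraint `f_{j₀} = 0` with `j₀ ∉ J`. -/
lemma no_sol_overdetermined (A : Fin k → Finset (Fin n →₀ ℕ)) (hA : ∀ j, (A j).Nonempty)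
    (J : Finset (Fin k)) (hJ : J ≠ Finset.univ) (z : (Fin k × (Fin n →₀ ℕ)) ⊕ Fin n → L)
    (hz : AlgebraicIndependent ℂ z) (x : Fin n → L) (l : Fin k → L) (hx : ∀ i, x i ≠ 0)
    (hf : ∀ j, ∑ α ∈ A j, z (Sum.inl (j, α)) * ∏ i, x i ^ α i = 0)
    (hv : ∀ i, z (Sum.inr i) =
      ∑ j ∈ J, l j * ∑ α ∈ A j, (α i : L) * z (Sum.inl (j, α)) * ∏ i, x i ^ α i) :
    False := by
  classical
  obtain ⟨j0, hj0⟩ : ∃ j0, j0 ∉ J := by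
    by_contra! h; exact hJ (Finset.eq_univ_iff_forall.2 h)
  obtain ⟨α0, hα0⟩ := hA j0
  obtain ⟨D, hD⟩ := exists_derivation hz (Sum.inl (j0, α0))
  have hDJ : ∀ j ∈ J, ∀ α, D (z (Sum.inl (j, α))) = 0 := by
    intro j hj α
    have : j ≠ j0 := fun h => hj0 (h ▸ hj)
    simp [hD, this]
  have hw : ∀ m, D (x m) / x m = 0 := by
    intro m
    obtain ⟨E, hE⟩ := exists_derivation hz (Sum.inr m)
    have hEJ : ∀ j ∈ J, ∀ α, E (z (Sum.inl (j, α))) = 0 := by simp [hE]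
    have h1 := symm_pairing D E x hx A (fun j α => z (Sum.inl (j, α))) l J hDJ hEJ hf _ hv
    have h2 := symm_pairing E D x hx A (fun j α => z (Sum.inl (j, α))) l J hEJ hDJ hf _ hv
    simp only [mul_comm (∑ i, _ * (E (x i) / x i))] at h2
    rw [← h1] at h2
    simpa [hD, hE] using h2
  have h3 := deriv_eval D x hx (A j0) (fun α => z (Sum.inl (j0, α)))
  simp only [hf j0, map_zero, hw, mul_zero, Finset.sum_const_zero, add_zero] at h3
  rw [Finset.sum_eq_single_of_mem α0 hα0 (fun α _ hne => by simp [hD, hne])] at h3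
  simp only [hD, if_true, one_mul] at h3
  exact Finset.prod_ne_zero_iff.2 (fun i _ => pow_ne_zero _ (hx i)) h3.symm

end field

/-! ### Initial forms of the ML system -/

/-- The initial form of a sum of nonzero terms with distinct exponents `e t`, where `P` selects the
indices of minimal weight. -/
lemma initw_sum {σ κ : Type} [Fintype σ] (w : σ → ℤ) (T : Finset κ) (e : κ → σ →₀ ℕ)
    (a : κ → ℂ) (he : Set.InjOn e T) (ha : ∀ t ∈ T, a t ≠ 0)
    (P : κ → Prop) [DecidablePred P]
    (hP : ∀ t ∈ T, P t ↔ ∀ t' ∈ T, ∑ i, w i * (e t i : ℤ) ≤ ∑ i, w i * (e t' i : ℤ)) :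
    initw w (∑ t ∈ T, monomial (e t) (a t)) =
      ∑ t ∈ T, if P t then monomial (e t) (a t) else 0 := by
  classical
  set f := ∑ t ∈ T, monomial (e t) (a t) with hf
  have hc : ∀ t ∈ T, coeff (e t) f = a t := by
    intro t ht
    rw [hf, coeff_sum, Finset.sum_eq_single_of_mem t ht]
    · simp
    · intro t' ht' hne
      rw [coeff_monomial, if_neg fun h => hne (he ht' ht h)]
  have hs : f.support = T.image e := by
    ext d
    rw [mem_support_iff, Finset.mem_image]
    constructor
    · intro h
      by_contra hd
      refine h ?_
      rw [hf, coeff_sum]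
      refine Finset.sum_eq_zero fun t ht => ?_
      rw [coeff_monomial, if_neg fun h => hd ⟨t, ht, h⟩]
    · rintro ⟨t, ht, rfl⟩
      rw [hc t ht]
      exact ha t ht
  rw [initw, Finset.sum_filter, hs, Finset.sum_image he]
  refine Finset.sum_congr rfl fun t ht => ?_
  rw [hc t ht]
  simp only [Finset.forall_mem_image]
  exact if_congr (hP t ht).symm rfl rfl

lemma initw_of_const {σ : Type} [Fintype σ] (w : σ → ℤ) (f : MvPolynomial σ ℂ)
    (h : ∀ d ∈ f.support, ∑ i, w i * (d i : ℤ) = 0) : initw w f = f := by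
  rw [initw, Finset.filter_true_of_mem, support_sum_monomial_coeff]
  intro d hd d' hd'
  rw [h d hd, h d' hd']

lemma initw_rename {n k : ℕ} (b : Fin k → ℤ) (f : MvPolynomial (Fin n) ℂ) :
    initw (Sum.elim (0 : Fin n → ℤ) b) (rename Sum.inl f) = rename Sum.inl f := by
  classical
  refine initw_of_const _ _ fun d hd => ?_
  rw [support_rename_of_injective Sum.inl_injective, Finset.mem_image] at hd
  obtain ⟨d, _, rfl⟩ := hd
  rw [Fintype.sum_sum_type]
  simp [Finsupp.mapDomain_of_notMem_range]

/-- The exponents of `ℓ_i`: `none` is the constant term `u_i`, and `some ⟨j, α⟩` is the monomial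
`λ_j x^α`. They do not depend on `i`. -/
noncomputable def ellExp (n k : ℕ) : Option (Σ _ : Fin k, Fin n →₀ ℕ) → (Fin n ⊕ Fin k →₀ ℕ)
  | none => 0
  | some t => Finsupp.mapDomain Sum.inl t.2 + Finsupp.single (Sum.inr t.1) 1

lemma ellExp_inr (n k : ℕ) (t : Σ _ : Fin k, Fin n →₀ ℕ) (j : Fin k) :
    ellExp n k (some t) (Sum.inr j) = if t.1 = j then 1 else 0 := by
  rw [ellExp, Finsupp.add_apply, Finsupp.mapDomain_of_notMem_range]
  · simp [Finsupp.single_apply]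
  · simp

lemma ellExp_inl (n k : ℕ) (t : Σ _ : Fin k, Fin n →₀ ℕ) (i : Fin n) :
    ellExp n k (some t) (Sum.inl i) = t.2 i := by
  rw [ellExp, Finsupp.add_apply, Finsupp.mapDomain_apply Sum.inl_injective]
  simp

lemma ellExp_injective (n k : ℕ) : Function.Injective (ellExp n k) := by
  rintro (_ | t) (_ | t') h
  · rfl
  · have := DFunLike.congr_fun h (Sum.inr t'.1)
    rw [ellExp_inr] at this; simp [ellExp] at this
  · have := DFunLike.congr_fun h (Sum.inr t.1)
    rw [ellExp_inr] at this; simp [ellExp] at this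
  · have h1 := DFunLike.congr_fun h (Sum.inr t'.1)
    rw [ellExp_inr, ellExp_inr, if_pos rfl] at h1
    have h2 : t.1 = t'.1 := by by_contra hne; simp [hne] at h1
    have h3 : t.2 = t'.2 := by
      ext i
      have := DFunLike.congr_fun h (Sum.inl i)
      rwa [ellExp_inl, ellExp_inl] at this
    rw [show t = t' from Sigma.ext h2 (heq_of_eq h3)]

lemma weight_ellExp (n k : ℕ) (b : Fin k → ℤ) (t) :
    ∑ i, Sum.elim (0 : Fin n → ℤ) b i * (ellExp n k t i : ℤ) = t.elim 0 (fun t => b t.1) := by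
  classical
  rcases t with _ | t
  · simp [ellExp]
  · rw [Fintype.sum_sum_type]
    simp [ellExp_inl, ellExp_inr]

/-- The monomial expansion of `ℓ_i`. Positivity of the exponents makes the truncated subtraction in
`x_i · ∂(x^α)/∂x_i = α_i x^α` harmless. -/
lemma mlEll_eq (n k : ℕ) (A : Fin k → Finset (Fin n →₀ ℕ)) (c : Fin k → (Fin n →₀ ℕ) → ℂ)
    (u : Fin n → ℂ) (i : Fin n) (hA1 : ∀ j, ∀ α ∈ A j, ∀ i, 1 ≤ α i) :
    mlEll n k (fun j => sparsePoly n (A j) (c j)) u i =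
      ∑ t ∈ (Finset.univ.sigma A).insertNone,
        monomial (ellExp n k t) (t.elim (u i) (fun t => -((t.2 i : ℂ) * c t.1 t.2))) := by
  rw [Finset.sum_insertNone, Finset.sum_sigma, mlEll, sub_eq_add_neg]
  congr 1
  rw [Finset.mul_sum, ← Finset.sum_neg_distrib]
  refine Finset.sum_congr rfl fun j _ => ?_
  rw [sparsePoly, map_sum, map_sum, Finset.mul_sum, Finset.mul_sum, ← Finset.sum_neg_distrib]
  refine Finset.sum_congr rfl fun α hα => ?_
  rw [pderiv_monomial, rename_monomial, X, X, monomial_mul, monomial_mul, ← map_neg]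
  have h1 : Finsupp.single i 1 + (α - Finsupp.single i 1) = α :=
    add_tsub_cancel_of_le (by simpa using hA1 j α hα i)
  have h2 : ellExp n k (some ⟨j, α⟩) = Finsupp.single (Sum.inl i) 1 +
      (Finsupp.single (Sum.inr j) 1 + Finsupp.mapDomain Sum.inl (α - Finsupp.single i 1)) := by
    conv_lhs => rw [ellExp, ← h1, Finsupp.mapDomain_add, Finsupp.mapDomain_single]
    abel
  rw [h2]
  simp [mul_comm]

lemma eval_ellExp (n k : ℕ) (p : Fin n ⊕ Fin k → ℂ) (j : Fin k) (α : Fin n →₀ ℕ) (r : ℂ) :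
    eval p (monomial (ellExp n k (some ⟨j, α⟩)) r) =
      r * (p (Sum.inr j) * ∏ i, p (Sum.inl i) ^ α i) := by
  classical
  rw [eval_monomial, Finsupp.prod_fintype _ _ (by simp), Fintype.prod_sum_type]
  simp only [ellExp_inl, ellExp_inr]
  simp [pow_ite, mul_comm]

/-- The value of `init_w(ℓ_i)` for `w = (0, b)`, where `m = min(0, min b)`. -/
lemma eval_initw_mlEll (n k : ℕ) (A : Fin k → Finset (Fin n →₀ ℕ)) (hA : ∀ j, (A j).Nonempty)
    (c : Fin k → (Fin n →₀ ℕ) → ℂ) (u : Fin n → ℂ) (i : Fin n)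
    (hA1 : ∀ j, ∀ α ∈ A j, ∀ i, 1 ≤ α i) (hc : ∀ j, ∀ α ∈ A j, c j α ≠ 0) (hu : u i ≠ 0)
    (b : Fin k → ℤ) (m : ℤ) (hm0 : m ≤ 0) (hmb : ∀ j, m ≤ b j) (hm : m = 0 ∨ ∃ j, b j = m)
    (p : Fin n ⊕ Fin k → ℂ) :
    eval p (initw (Sum.elim (0 : Fin n → ℤ) b)
      (mlEll n k (fun j => sparsePoly n (A j) (c j)) u i)) =
    (if m = 0 then u i else 0) - ∑ j with b j = m, p (Sum.inr j) *
      ∑ α ∈ A j, (α i : ℂ) * c j α * ∏ i, p (Sum.inl i) ^ α i := by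
  classical
  have hle : ∀ t : Option (Σ _ : Fin k, Fin n →₀ ℕ), m ≤ t.elim 0 (fun t => b t.1) := by
    rintro (_ | t)
    · exact hm0
    · exact hmb t.1
  have hatt : ∃ t ∈ (Finset.univ.sigma A).insertNone, t.elim 0 (fun t => b t.1) = m := by
    rcases hm with rfl | ⟨j, rfl⟩
    · exact ⟨none, by simp, rfl⟩
    · obtain ⟨α, hα⟩ := hA j
      exact ⟨some ⟨j, α⟩, by simpa using hα, rfl⟩
  rw [mlEll_eq n k A c u i hA1, initw_sum _ _ _ _ (ellExp_injective n k).injOn _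
    (fun t => t.elim 0 (fun t => b t.1) = m)]
  · rw [Finset.sum_insertNone, Finset.sum_sigma, map_add, sub_eq_add_neg]
    congr 1
    · by_cases h : m = 0
      · simp [h, ellExp]
      · simp [h, Ne.symm h]
    · rw [Finset.sum_filter, ← Finset.sum_neg_distrib, map_sum]
      refine Finset.sum_congr rfl fun j _ => ?_
      by_cases h : b j = m
      · simp only [Option.elim_some, h, if_true, map_sum, eval_ellExp]
        rw [Finset.mul_sum, ← Finset.sum_neg_distrib]
        exact Finset.sum_congr rfl fun α _ => by ring
      · simp [h]
  · intro t _
    simp only [weight_ellExp]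
    constructor
    · intro h t' _
      rw [h]
      exact hle t'
    · intro h
      obtain ⟨t', ht', h'⟩ := hatt
      exact le_antisymm (h' ▸ h t' ht') (hle t)
  · rintro (_ | ⟨j, α⟩) ht
    · exact hu
    · have hα : α ∈ A j := by simpa using ht
      exact neg_ne_zero.2 (mul_ne_zero
        (Nat.cast_ne_zero.2 (Nat.one_le_iff_ne_zero.1 (hA1 j α hα i))) (hc j α hα))

lemma eval_sparsePoly (n : ℕ) (A : Finset (Fin n →₀ ℕ)) (c : (Fin n →₀ ℕ) → ℂ) (x : Fin n → ℂ) :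
    eval x (sparsePoly n A c) = ∑ α ∈ A, c α * ∏ i, x i ^ α i := by
  rw [sparsePoly, map_sum]
  refine Finset.sum_congr rfl fun α _ => ?_
  rw [eval_monomial, Finsupp.prod_fintype _ _ (by simp)]

/-! ### Eliminants of the initial systems -/

/-- The equations `f_j = 0` and `ε u_i = ∑_{j ∈ J} λ_j θ_i f_j` as polynomials in the parameters
`(c, u)` (left summand) and the unknowns `(x, λ)` (right summand). -/
noncomputable def initEqn (n k : ℕ) (A : Fin k → Finset (Fin n →₀ ℕ)) (ε : ℂ)
    (J : Finset (Fin k)) :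
    Fin k ⊕ Fin n → MvPolynomial (((Fin k × (Fin n →₀ ℕ)) ⊕ Fin n) ⊕ (Fin n ⊕ Fin k)) ℂ
  | Sum.inl j => ∑ α ∈ A j, X (Sum.inl (Sum.inl (j, α))) * ∏ i, X (Sum.inr (Sum.inl i)) ^ α i
  | Sum.inr i => C ε * X (Sum.inl (Sum.inr i)) - ∑ j ∈ J, X (Sum.inr (Sum.inr j)) *
      ∑ α ∈ A j, (α i : MvPolynomial _ ℂ) * X (Sum.inl (Sum.inl (j, α))) *
        ∏ i, X (Sum.inr (Sum.inl i)) ^ α i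

/-- A nonzero polynomial in `(c, u)` vanishing whenever the system given by `ε` and `J` has a
solution in the torus. -/
lemma exists_eliminant (n k : ℕ) (A : Fin k → Finset (Fin n →₀ ℕ)) (hA : ∀ j, (A j).Nonempty)
    (ε : ℂ) (J : Finset (Fin k)) (h : ε = 0 ∧ J.Nonempty ∨ ε = 1 ∧ J ≠ Finset.univ) :
    ∃ G : MvPolynomial ((Fin k × (Fin n →₀ ℕ)) ⊕ Fin n) ℂ, G ≠ 0 ∧
      ∀ (c : Fin k → (Fin n →₀ ℕ) → ℂ) (u : Fin n → ℂ) (p : Fin n ⊕ Fin k → ℂ),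
        (∀ t, p t ≠ 0) →
        (∀ j, ∑ α ∈ A j, c j α * ∏ i, p (Sum.inl i) ^ α i = 0) →
        (∀ i, ε * u i - ∑ j ∈ J, p (Sum.inr j) *
          ∑ α ∈ A j, (α i : ℂ) * c j α * ∏ i, p (Sum.inl i) ^ α i = 0) →
        eval (Sum.elim (fun p : Fin k × (Fin n →₀ ℕ) => c p.1 p.2) u) G = 0 := by
  obtain ⟨G, hG, hG'⟩ := elim_lemma (initEqn n k A ε J) (∏ t, X (Sum.inr t)) (by
    intro L _ _ z p hz hE hM
    have hp : ∀ t, p t ≠ 0 := by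
      intro t
      have := Finset.prod_ne_zero_iff.1 (by simpa only [map_prod, aeval_X, Sum.elim_inr]
        using hM) t (Finset.mem_univ t)
      exact this
    have hf : ∀ j, ∑ α ∈ A j, z (Sum.inl (j, α)) * ∏ i, p (Sum.inl i) ^ α i = 0 := by
      intro j
      simpa [initEqn] using hE (Sum.inl j)
    have hv : ∀ i, algebraMap ℂ L ε * z (Sum.inr i) - ∑ j ∈ J, p (Sum.inr j) *
        ∑ α ∈ A j, (α i : L) * z (Sum.inl (j, α)) * ∏ i, p (Sum.inl i) ^ α i = 0 := by
      intro i
      simpa [initEqn] using hE (Sum.inr i)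
    rcases h with ⟨rfl, hJ⟩ | ⟨rfl, hJ⟩
    · exact no_sol_degenerate A hA J hJ z hz (fun i => p (Sum.inl i)) (fun j => p (Sum.inr j))
        (fun i => hp _) (fun j => hp _) hf (fun i => by simpa using hv i)
    · exact no_sol_overdetermined A hA J hJ z hz (fun i => p (Sum.inl i))
        (fun j => p (Sum.inr j)) (fun i => hp _) hf
        (fun i => sub_eq_zero.1 (by simpa using hv i)))
  refine ⟨G, hG, fun c u p hp hf hv => hG' _ p ?_ ?_⟩
  · rintro (j | i)
    · simpa [initEqn] using hf j
    · simpa [initEqn] using hv i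
  · simpa [Finset.prod_ne_zero_iff] using ⟨fun i => hp (Sum.inl i), fun j => hp (Sum.inr j)⟩

/-- for finite nonempty supports all of whose exponents have every
coordinate `≥ 1`, there is a nonzero polynomial `G` in the coefficients and data such
that whenever `G(c,u) ≠ 0`, for every nonzero `w = (0,b)` whose first `n` coordinates
vanish, the initial system `init_w(L(F))` has no solutions in `(ℂ*)^{n+k}`. -/
theorem statement10 (n k : ℕ)
    (A : Fin k → Finset (Fin n →₀ ℕ)) (hA : ∀ j, (A j).Nonempty)
    (hA1 : ∀ j, ∀ α ∈ A j, ∀ i, 1 ≤ α i) :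
    ∃ G : MvPolynomial ((Fin k × (Fin n →₀ ℕ)) ⊕ Fin n) ℂ, G ≠ 0 ∧
      ∀ (c : Fin k → (Fin n →₀ ℕ) → ℂ) (u : Fin n → ℂ),
        eval (Sum.elim (fun p : Fin k × (Fin n →₀ ℕ) => c p.1 p.2) u) G ≠ 0 →
          ∀ b : Fin k → ℤ, b ≠ 0 →
            ¬ ∃ p : Fin n ⊕ Fin k → ℂ, (∀ i, p i ≠ 0) ∧
                (∀ i, eval p (initw (Sum.elim (0 : Fin n → ℤ) b)
                  (mlEll n k (fun j => sparsePoly n (A j) (c j)) u i)) = 0) ∧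
                (∀ j, eval p (initw (Sum.elim (0 : Fin n → ℤ) b)
                  (rename Sum.inl (sparsePoly n (A j) (c j)))) = 0) := by
  classical
  have hgen : ∀ (ε : ℂ) (J : Finset (Fin k)),
      ∃ G : MvPolynomial ((Fin k × (Fin n →₀ ℕ)) ⊕ Fin n) ℂ, G ≠ 0 ∧
      ((ε = 0 ∧ J.Nonempty ∨ ε = 1 ∧ J ≠ Finset.univ) →
      ∀ (c : Fin k → (Fin n →₀ ℕ) → ℂ) (u : Fin n → ℂ) (p : Fin n ⊕ Fin k → ℂ),
        (∀ t, p t ≠ 0) →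
        (∀ j, ∑ α ∈ A j, c j α * ∏ i, p (Sum.inl i) ^ α i = 0) →
        (∀ i, ε * u i - ∑ j ∈ J, p (Sum.inr j) *
          ∑ α ∈ A j, (α i : ℂ) * c j α * ∏ i, p (Sum.inl i) ^ α i = 0) →
        eval (Sum.elim (fun p : Fin k × (Fin n →₀ ℕ) => c p.1 p.2) u) G = 0) := by
    intro ε J
    by_cases h : ε = 0 ∧ J.Nonempty ∨ ε = 1 ∧ J ≠ Finset.univ
    · obtain ⟨G, hG, hG'⟩ := exists_eliminant n k A hA ε J h
      exact ⟨G, hG, fun _ => hG'⟩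
    · exact ⟨1, one_ne_zero, fun hcase => absurd hcase h⟩
  -- Besides the eliminants, the polynomial forces the coefficients and the data to be nonzero.
  choose Γ hΓ0 hΓ using hgen
  refine ⟨(∏ j, ∏ α ∈ A j, X (Sum.inl (j, α))) * (∏ i, X (Sum.inr i)) *
    ((∏ J, Γ 0 J) * ∏ J, Γ 1 J), ?_, ?_⟩
  · refine mul_ne_zero (mul_ne_zero ?_ ?_) (mul_ne_zero ?_ ?_)
    · exact Finset.prod_ne_zero_iff.2 fun j _ => Finset.prod_ne_zero_iff.2 fun α _ => X_ne_zero _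
    · exact Finset.prod_ne_zero_iff.2 fun i _ => X_ne_zero _
    · exact Finset.prod_ne_zero_iff.2 fun J _ => hΓ0 0 J
    · exact Finset.prod_ne_zero_iff.2 fun J _ => hΓ0 1 J
  rintro c u hG b hb ⟨p, hp, hell, hf⟩
  simp only [map_mul, map_prod, eval_X, Sum.elim_inl, Sum.elim_inr, mul_ne_zero_iff,
    Finset.prod_ne_zero_iff] at hG
  obtain ⟨⟨hc, hu⟩, hG0, hG1⟩ := hG
  have hf' : ∀ j, ∑ α ∈ A j, c j α * ∏ i, p (Sum.inl i) ^ α i = 0 := by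
    intro j
    have := hf j
    rw [initw_rename, eval_rename, eval_sparsePoly] at this
    exact this
  have hell' := fun m h1 h2 h3 i => (eval_initw_mlEll n k A hA c u i hA1
    (fun j α hα => hc j (Finset.mem_univ j) α hα) (hu i (Finset.mem_univ i)) b m h1 h2 h3
    p).symm.trans (hell i)
  by_cases hneg : ∃ j, b j < 0
  · obtain ⟨j, hj⟩ := hneg
    obtain ⟨j1, -, hj1⟩ := Finset.exists_min_image Finset.univ b ⟨j, Finset.mem_univ j⟩
    have hlt : b j1 < 0 := (hj1 j (Finset.mem_univ j)).trans_lt hj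
    refine hG0 (Finset.univ.filter fun j => b j = b j1) (Finset.mem_univ _)
      (hΓ 0 _ (Or.inl ⟨rfl, ⟨j1, by simp⟩⟩) c u p hp hf' fun i => ?_)
    have := hell' (b j1) hlt.le (fun j => hj1 j (Finset.mem_univ j)) (Or.inr ⟨j1, rfl⟩) i
    rw [if_neg hlt.ne] at this
    rw [zero_mul]
    exact this
  · push Not at hneg
    refine hG1 (Finset.univ.filter fun j => b j = 0) (Finset.mem_univ _)
      (hΓ 1 _ (Or.inr ⟨rfl, fun h => hb ?_⟩) c u p hp hf' fun i => ?_)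
    · funext j
      simpa using Finset.eq_univ_iff_forall.1 h j
    have := hell' 0 le_rfl hneg (Or.inl rfl) i
    rw [if_pos rfl] at this
    rw [one_mul]
    exact this
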